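/- Let T>0, E a separable Banach space, V a Banach space densely and continuously embedded in E, and {A(t)}_{t∈[0,T]} a family of linear operators on E satisfying (Hyp'1) with constant ω>0 and (Hyp2)–(Hyp5). Let F:[0,T]×E→E be a completely continuous map (continuous and mapping bounded sets into relatively compact sets) satisfying (F1), (F2) and (F4). Let {F_∞(t)}_{t∈[0,T]} be a family of compact bounded linear operators on E such that t↦F_∞(t)∈L(E,E) is continuous, F_∞(0)=F_∞(T), and lim_{‖x‖→∞} ‖F(t,x) − F_∞(t)x‖/‖x‖ = 0 uniformly with respect to t∈[0,T]. Let Â be the closure of A_0 := (1/T)∫_0^T A(τ)dτ (with domain V) and F̂_∞ := (1/T)∫_0^T F_∞(τ)dτ. If for every λ∈(0,1] the linear periodic problem u'(t)=λ(A(t)+F_∞(t))u(t) on [0,T], u(0)=u(T), has no nontrivial mild solution, and Ker(Â + F̂_∞) = {0}, then the equation u'(t)=A(t)u(t)+F(t,u(t)) admits a mild solution u:[0,T]→E with u(0)=u(T). -/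

import Mathlib

open Filter Topology Set MeasureTheory

noncomputable section

variable {E : Type*} [NormedAddCommGroup E] [NormedSpace ℝ E]

/-- A C₀ semigroup of bounded linear operators on `E`. -/
structure IsC0Semigroup (S : ℝ → E →L[ℝ] E) : Prop where
  map_zero : S 0 = 1
  map_add : ∀ ⦃t s : ℝ⦄, 0 ≤ t → 0 ≤ s → S (t + s) = (S t).comp (S s)
  strong_cont : ∀ x : E, ContinuousOn (fun t => S t x) (Ici (0 : ℝ))

/-- `y` is the limit of `t⁻¹ • (S t x - x)` as `t → 0⁺`. -/
def GenLimitAt (S : ℝ → E →L[ℝ] E) (x y : E) : Prop :=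
  Tendsto (fun t : ℝ => t⁻¹ • (S t x - x)) (𝓝[>] (0 : ℝ)) (𝓝 y)

/-- The (unbounded) operator with domain `D` and action `A` is the generator of `S`. -/
def IsGeneratorOf (D : Set E) (A : E → E) (S : ℝ → E →L[ℝ] E) : Prop :=
  (∀ x, x ∈ D ↔ ∃ y, GenLimitAt S x y) ∧ ∀ x ∈ D, GenLimitAt S x (A x)

/-- Graph of an operator with domain `D` and action `A`. -/
def opGraph (D : Set E) (A : E → E) : Set (E × E) := {p | p.1 ∈ D ∧ p.2 = A p.1}

/-- The operator `(D, A)` is closable: the closure of its graph is a graph of a function. -/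
def IsClosableOp (D : Set E) (A : E → E) : Prop :=
  ∀ x y₁ y₂, (x, y₁) ∈ closure (opGraph D A) → (x, y₂) ∈ closure (opGraph D A) → y₁ = y₂

/-- `(D', A')` is the closure of the operator `(D, A)`. -/
def IsClosureOf (D' : Set E) (A' : E → E) (D : Set E) (A : E → E) : Prop :=
  (∀ x, x ∈ D' ↔ ∃ y, (x, y) ∈ closure (opGraph D A)) ∧
  ∀ x ∈ D', (x, A' x) ∈ closure (opGraph D A)

/-- `(D, A)` is a linear operator (its domain is a subspace on which it acts linearly). -/
def IsLinearOp (D : Set E) (A : E → E) : Prop :=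
  (0 : E) ∈ D ∧
  (∀ x ∈ D, ∀ y ∈ D, x + y ∈ D ∧ A (x + y) = A x + A y) ∧
  (∀ (c : ℝ), ∀ x ∈ D, c • x ∈ D ∧ A (c • x) = c • A x)

/-- An evolution system `{R(t,s)}_{0 ≤ s ≤ t ≤ T}` on `E`. -/
structure IsEvolutionSystem (T : ℝ) (R : ℝ → ℝ → E →L[ℝ] E) : Prop where
  refl : ∀ t ∈ Icc (0 : ℝ) T, R t t = 1
  comp : ∀ ⦃s r t : ℝ⦄, 0 ≤ s → s ≤ r → r ≤ t → t ≤ T → R t s = (R t r).comp (R r s)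
  strong_cont : ∀ x : E, ContinuousOn (fun p : ℝ × ℝ => R p.1 p.2 x)
    {p : ℝ × ℝ | 0 ≤ p.2 ∧ p.2 ≤ p.1 ∧ p.1 ≤ T}

/-- The parameter domain `{(t,s) : 0 ≤ s ≤ t ≤ T}` of an evolution system. -/
def evolDomain (T : ℝ) : Set (ℝ × ℝ) := {p : ℝ × ℝ | 0 ≤ p.2 ∧ p.2 ≤ p.1 ∧ p.1 ≤ T}

/-- A family `{R^{(λ)}}_{λ∈[0,1]}` of evolution systems is continuous: for every `x ∈ E`
and every sequence `λₙ → λ₀` in `[0,1]`, `R^{(λₙ)}(t,s)x → R^{(λ₀)}(t,s)x` uniformly in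
`0 ≤ s ≤ t ≤ T`. -/
def IsContinuousEvolFamily (T : ℝ) (R : ℝ → ℝ → ℝ → E →L[ℝ] E) : Prop :=
  ∀ (x : E) (l : ℕ → ℝ) (l0 : ℝ), (∀ n, l n ∈ Icc (0 : ℝ) 1) → l0 ∈ Icc (0 : ℝ) 1 →
    Tendsto l atTop (𝓝 l0) →
    TendstoUniformlyOn (fun n p => R (l n) p.1 p.2 x) (fun p => R l0 p.1 p.2 x)
      atTop (evolDomain T)

/-- The map `Σ(x,w,λ)(t) = R^{(λ)}(t,0)x + ∫₀ᵗ R^{(λ)}(t,s) w(s) ds`. -/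
def evolMap (R : ℝ → ℝ → E →L[ℝ] E) (x : E) (w : ℝ → E) (t : ℝ) : E :=
  R t 0 x + ∫ s in (0 : ℝ)..t, R t s (w s)

/-- The Hausdorff measure of noncompactness of a set `Q`. -/
def hausdorffMNC (Q : Set E) : ℝ :=
  sInf {r : ℝ | 0 < r ∧ ∃ c : Finset E, Q ⊆ ⋃ y ∈ c, Metric.ball y r}

variable {V : Type*} [NormedAddCommGroup V] [NormedSpace ℝ V]

/-- The data of a time-dependent family `{A(t)}` of (unbounded) linear operators on `E`:
domains `dom t`, actions `op t`, the C₀ semigroups `sg t = S_{A(t)}`, and the bounded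
operators `bdd t ∈ L(V,E)` obtained by restricting `A(t)` to `V` (via the embedding `ι`). -/
structure HypData (E V : Type*) [NormedAddCommGroup E] [NormedSpace ℝ E]
    [NormedAddCommGroup V] [NormedSpace ℝ V] where
  dom : ℝ → Set E
  op : ℝ → E → E
  sg : ℝ → ℝ → E →L[ℝ] E
  bdd : ℝ → V →L[ℝ] E

/-- Each `A(t)`, `t ∈ [0,T]`, generates the C₀ semigroup `sg t`. -/
def HypGen (T : ℝ) (A : HypData E V) : Prop :=
  ∀ t ∈ Icc (0 : ℝ) T, IsC0Semigroup (A.sg t) ∧ IsGeneratorOf (A.dom t) (A.op t) (A.sg t)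

/-- Stability of a family of semigroups: for `0 ≤ t₁ ≤ ⋯ ≤ tₙ ≤ T`, `sᵢ ≥ 0`,
`‖S(t₁)(s₁)⋯S(tₙ)(sₙ)‖ ≤ M e^{ω(s₁+⋯+sₙ)}`. -/
def StableFamily {F : Type*} [NormedRing F] (T : ℝ) (S : ℝ → ℝ → F) (M ω : ℝ) : Prop :=
  ∀ (n : ℕ) (ts ss : Fin n → ℝ), Monotone ts → (∀ i, ts i ∈ Icc (0 : ℝ) T) →
    (∀ i, 0 ≤ ss i) →
    ‖(List.ofFn fun i => S (ts i) (ss i)).prod‖ ≤ M * Real.exp (ω * ∑ i, ss i)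

/-- Condition (Hyp'1): stability with `M = 1` and exponent `−ω`, `ω > 0`. -/
def Hyp1' (T : ℝ) (A : HypData E V) (ω : ℝ) : Prop :=
  0 < ω ∧ StableFamily T A.sg 1 (-ω)

/-- Condition (Hyp1): stability with constants `M ≥ 1`, `ω ∈ ℝ`. -/
def Hyp1 (T : ℝ) (A : HypData E V) (M ω : ℝ) : Prop :=
  1 ≤ M ∧ StableFamily T A.sg M ω

variable (ι : V →L[ℝ] E)

/-- Condition (Hyp2): `V` is `A(t)`-admissible for each `t` and the family of parts of the
`A(t)` in `V` is stable with constants `M_V`, `ω_V`. -/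
def Hyp2 (T : ℝ) (A : HypData E V) (MV ωV : ℝ) : Prop :=
  ∃ SV : ℝ → ℝ → V →L[ℝ] V,
    (∀ t ∈ Icc (0 : ℝ) T, IsC0Semigroup (SV t)) ∧
    (∀ t ∈ Icc (0 : ℝ) T, ∀ s ≥ (0 : ℝ), ∀ v : V, ι (SV t s v) = A.sg t s (ι v)) ∧
    1 ≤ MV ∧ StableFamily T SV MV ωV

/-- Condition (Hyp3): `V ⊆ D(A(t))`, `A(t)|_V = bdd t ∈ L(V,E)`, and `t ↦ bdd t` is
norm-continuous on `[0,T]`. -/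
def Hyp3 (T : ℝ) (A : HypData E V) : Prop :=
  (∀ t ∈ Icc (0 : ℝ) T, ∀ v : V, ι v ∈ A.dom t ∧ A.op t (ι v) = A.bdd t v) ∧
  ContinuousOn A.bdd (Icc (0 : ℝ) T)

/-- The time average `A₀ = (1/T)∫₀ᵀ A(τ) dτ ∈ L(V,E)`. -/
def timeAvg (T : ℝ) (A : HypData E V) : V →L[ℝ] E :=
  (1 / T) • ∫ τ in (0 : ℝ)..T, A.bdd τ

/-- Condition (Hyp4): there is `μ₀ > −ω` such that `(μ₀ I − A₀)V` is dense in `E`. -/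
def Hyp4 (T : ℝ) (A : HypData E V) (ω : ℝ) : Prop :=
  ∃ μ0 : ℝ, -ω < μ0 ∧ Dense (Set.range fun v : V => μ0 • ι v - timeAvg T A v)

/-- Condition (Hyp5): `A(0) = A(T)` (equal domains and actions). -/
def Hyp5 (T : ℝ) (A : HypData E V) : Prop :=
  A.dom 0 = A.dom T ∧ ∀ x ∈ A.dom 0, A.op 0 x = A.op T x

/-- `R` is the evolution system determined by the family with restrictions `Abdd t ∈ L(V,E)`:
it is an evolution system satisfying the norm bound `‖R(t,s)‖ ≤ M e^{ω(t−s)}`, with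
`(∂⁺/∂t)R(t,s)v|_{t=s} = A(s)v` and `(∂/∂s)R(t,s)v = −R(t,s)A(s)v` for `v ∈ V`. -/
def IsDeterminedEvolSystem (T : ℝ) (Abdd : ℝ → V →L[ℝ] E) (M ω : ℝ)
    (R : ℝ → ℝ → E →L[ℝ] E) : Prop :=
  IsEvolutionSystem T R ∧
  (∀ s t : ℝ, 0 ≤ s → s ≤ t → t ≤ T → ‖R t s‖ ≤ M * Real.exp (ω * (t - s))) ∧
  (∀ v : V, ∀ s ∈ Ico (0 : ℝ) T,
    HasDerivWithinAt (fun t => R t s (ι v)) (Abdd s v) (Ici s) s) ∧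
  (∀ v : V, ∀ s t : ℝ, 0 ≤ s → s ≤ t → t ≤ T →
    HasDerivWithinAt (fun r => R t r (ι v)) (-(R t s (Abdd s v))) (Icc (0 : ℝ) t) s)

section Brouwer
variable {W : Type*} [NormedAddCommGroup W] [InnerProductSpace ℝ W] [FiniteDimensional ℝ W]

lemma brw_det_poly (D : W →L[ℝ] W) : ∃ p : Polynomial ℝ,
    p.natDegree ≤ Module.finrank ℝ W ∧ ∀ t : ℝ, p.eval t = (1 + t • D : W →L[ℝ] W).det := by
  classical
  let b := Module.finBasis ℝ W
  let M := LinearMap.toMatrix b b (D : W →ₗ[ℝ] W)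
  refine ⟨Matrix.det ((Polynomial.X : Polynomial ℝ) • M.map Polynomial.C
    + (1 : Matrix _ _ ℝ).map Polynomial.C), ?_, ?_⟩
  · simpa using Polynomial.natDegree_det_X_add_C_le M 1
  · intro t
    rw [← Polynomial.coe_evalRingHom, RingHom.map_det, ContinuousLinearMap.det,
      ← LinearMap.det_toMatrix b]
    congr 1
    ext i j
    by_cases hij : i = j
    · simp [Matrix.add_apply, M, hij, LinearMap.toMatrix_apply]
      ring
    · simp [Matrix.add_apply, M, hij, LinearMap.toMatrix_apply]
      ring

lemma brw_det_pos (D : W →L[ℝ] W) (hD : ‖D‖ < 1) : 0 < (1 + D : W →L[ℝ] W).det := by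
  have hne : ∀ s ∈ Icc (0:ℝ) 1, (1 + s • D : W →L[ℝ] W).det ≠ 0 := by
    intro s hs
    have h1 : ‖-(s • D)‖ < 1 := by
      rw [norm_neg, norm_smul, Real.norm_of_nonneg hs.1]
      nlinarith [norm_nonneg D, hs.1, hs.2]
    have h2 : IsUnit (1 + s • D : W →L[ℝ] W) := by
      have := isUnit_one_sub_of_norm_lt_one h1
      simpa using this
    have h3 : IsUnit ((1 + s • D : W →L[ℝ] W) : W →ₗ[ℝ] W) :=
      h2.map (ContinuousLinearMap.toLinearMapRingHom : (W →L[ℝ] W) →+* (W →ₗ[ℝ] W))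
    exact ((LinearMap.isUnit_iff_isUnit_det _).1 h3).ne_zero
  obtain ⟨p, -, hp⟩ := brw_det_poly D
  have hc : ContinuousOn (fun s : ℝ => p.eval s) (Icc 0 1) := p.continuous.continuousOn
  by_contra hcon
  have h0 : p.eval 0 = 1 := by rw [hp]; simp [ContinuousLinearMap.det]
  have h1 : p.eval 1 ≤ 0 := by rw [hp]; simpa using hcon
  obtain ⟨s, hs, hs0⟩ := intermediate_value_Icc' (zero_le_one) hc
    (show (0:ℝ) ∈ Icc (p.eval 1) (p.eval 0) from ⟨h1, by rw [h0]; norm_num⟩)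
  exact hne s hs (by rw [← hp]; exact hs0)

lemma brw_no_retract [MeasurableSpace W] [BorelSpace W] (r : W → W) (U : Set W) (hU : IsOpen U)
    (hBU : Metric.closedBall (0:W) 1 ⊆ U) (hr : ContDiffOn ℝ 1 r U)
    (hn : ∀ x ∈ Metric.closedBall (0:W) 1, ‖r x‖ = 1) (hid : ∀ x, ‖x‖ = 1 → r x = x) : False := by
  set h : W → W := fun x => r x - x with hh
  have hhc : ContDiffOn ℝ 1 h U := hr.sub contDiffOn_id
  set D : W → W →L[ℝ] W := fderiv ℝ h with hDdef
  have hDc : ContinuousOn D U := hhc.continuousOn_fderiv_of_isOpen hU le_rfl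
  have hDs : ∀ x ∈ U, HasStrictFDerivAt h (D x) x := fun x hx =>
    (hhc.contDiffAt (hU.mem_nhds hx)).hasStrictFDerivAt one_ne_zero
  have hcomp : IsCompact (Metric.closedBall (0:W) 1) := isCompact_closedBall 0 1
  obtain ⟨M, hM⟩ := hcomp.exists_bound_of_continuousOn (hDc.mono hBU)
  have hM0 : 0 ≤ M := (norm_nonneg _).trans (hM 0 (by simp))
  have hLip : ∀ x ∈ Metric.closedBall (0:W) 1, ∀ y ∈ Metric.closedBall (0:W) 1,
      ‖h y - h x‖ ≤ M * ‖y - x‖ := fun x hx y hy =>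
    (convex_closedBall (0:W) 1).norm_image_sub_le_of_norm_hasFDerivWithin_le
      (fun z hz => (hDs z (hBU hz)).hasFDerivAt.hasFDerivWithinAt) hM hx hy
  have hbc : Metric.ball (0:W) 1 ⊆ Metric.closedBall (0:W) 1 := Metric.ball_subset_closedBall
  -- key volume identity
  have key : ∀ t : ℝ, 0 < t → t < 1 → t * M < 1 →
      ∫ x in Metric.ball (0:W) 1, (1 + t • D x : W →L[ℝ] W).det
        = (volume : Measure W).real (Metric.ball (0:W) 1) := by
    intro t ht0 ht1 htM
    set φ : W → W := fun x => x + t • h x with hφ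
    have hφs : ∀ x ∈ U, HasStrictFDerivAt φ (1 + t • D x) x := fun x hx =>
      (hasStrictFDerivAt_id x).add ((hDs x hx).const_smul t)
    have hnD : ∀ x ∈ Metric.closedBall (0:W) 1, ‖t • D x‖ < 1 := by
      intro x hx
      rw [norm_smul, Real.norm_of_nonneg ht0.le]
      exact (mul_le_mul_of_nonneg_left (hM x hx) ht0.le).trans_lt htM
    have hinj : InjOn φ (Metric.closedBall (0:W) 1) := by
      intro x hx y hy hxy
      have h1 : y - x = -(t • (h y - h x)) := by
        have : x + t • h x = y + t • h y := hxy
        rw [smul_sub]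
        have h2 : y = x + t • h x - t • h y := by rw [this]; abel
        nth_rewrite 1 [h2]
        abel
      have h2 : ‖y - x‖ ≤ t * M * ‖y - x‖ := by
        calc ‖y - x‖ = t * ‖h y - h x‖ := by
              conv_lhs => rw [h1]
              rw [norm_neg, norm_smul, Real.norm_of_nonneg ht0.le]
          _ ≤ t * (M * ‖y - x‖) := by gcongr; exact hLip x hx y hy
          _ = _ := by ring
      have h3 : ‖y - x‖ = 0 := by nlinarith [norm_nonneg (y - x)]
      exact (sub_eq_zero.1 (norm_eq_zero.1 h3)).symm
    have hφn : ∀ x ∈ Metric.closedBall (0:W) 1, ‖φ x‖ ≤ (1 - t) * ‖x‖ + t := by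
      intro x hx
      have : φ x = (1 - t) • x + t • r x := by
        simp only [hφ, hh, smul_sub, sub_smul, one_smul]; abel
      rw [this]
      refine (norm_add_le _ _).trans ?_
      rw [norm_smul, norm_smul, Real.norm_of_nonneg ht0.le, Real.norm_of_nonneg (by linarith), hn x hx]
      linarith
    have himg : φ '' Metric.ball (0:W) 1 = Metric.ball (0:W) 1 := by
      apply Subset.antisymm
      · rintro _ ⟨x, hx, rfl⟩
        have := hφn x (hbc hx)
        rw [mem_ball_zero_iff] at hx ⊢
        nlinarith
      · have hopen : IsOpen (φ '' Metric.ball (0:W) 1) := by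
          rw [isOpen_iff_mem_nhds]
          rintro _ ⟨x, hx, rfl⟩
          have hdet := brw_det_pos _ (hnD x (hbc hx))
          have hsurj : (1 + t • D x : W →L[ℝ] W).range = ⊤ := by
            have := (LinearMap.isUnit_iff_isUnit_det ((1 + t • D x : W →L[ℝ] W) : W →ₗ[ℝ] W)).2
              (isUnit_iff_ne_zero.2 hdet.ne')
            exact (LinearMap.isUnit_iff_range_eq_top _).1 this
          rw [← (hφs x (hBU (hbc hx))).map_nhds_eq_of_surj hsurj]
          exact image_mem_map (Metric.isOpen_ball.mem_nhds hx)
        refine (convex_ball (0:W) 1).isPreconnected.subset_of_closure_inter_subset hopen ?_ ?_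
        · refine ⟨φ 0, ?_, 0, by simp, rfl⟩
          have := hφn 0 (by simp)
          rw [mem_ball_zero_iff]
          simp only [norm_zero, mul_zero, zero_add] at this
          linarith
        · rintro y ⟨hy, hyb⟩
          have hcl : IsClosed (φ '' Metric.closedBall (0:W) 1) :=
            (hcomp.image_of_continuousOn (fun x hx =>
              (hφs x (hBU hx)).hasFDerivAt.continuousAt.continuousWithinAt)).isClosed
          obtain ⟨x, hx, rfl⟩ := closure_minimal (image_mono hbc) hcl hy
          refine ⟨x, ?_, rfl⟩
          rw [mem_closedBall_zero_iff] at hx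
          rw [mem_ball_zero_iff] at hyb ⊢
          refine lt_of_le_of_ne hx fun hx1 => ?_
          have : φ x = x := by simp [hφ, hh, hid x hx1]
          rw [this] at hyb
          linarith
    have hcv := integral_image_eq_integral_abs_det_fderiv_smul (volume : Measure W)
      (Metric.isOpen_ball.measurableSet : MeasurableSet (Metric.ball (0:W) 1))
      (fun x hx => (hφs x (hBU (hbc hx))).hasFDerivAt.hasFDerivWithinAt) (hinj.mono hbc)
      (fun _ => (1:ℝ))
    rw [himg] at hcv
    simp only [integral_const, smul_eq_mul, mul_one, measureReal_restrict_apply_univ] at hcv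
    rw [hcv]
    refine setIntegral_congr_fun Metric.isOpen_ball.measurableSet fun x hx => ?_
    exact (abs_of_pos (brw_det_pos _ (hnD x (hbc hx)))).symm
  -- interpolation
  set n := Module.finrank ℝ W
  set v : ℕ → ℝ := fun i => 1 / ((M + 2) * (i + 1)) with hv
  have hvpos : ∀ i, 0 < v i := fun i => by positivity
  have hvle : ∀ i, v i ≤ 1 / (M + 2) := fun i => by
    simp only [hv]
    apply one_div_le_one_div_of_le (by positivity)
    have : (0:ℝ) ≤ i := Nat.cast_nonneg i
    nlinarith
  have hv1 : ∀ i, v i < 1 := fun i => (hvle i).trans_lt (by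
    rw [div_lt_one (by positivity)]; linarith)
  have hvM : ∀ i, v i * M < 1 := fun i => by
    have := mul_le_mul_of_nonneg_right (hvle i) hM0
    refine this.trans_lt ?_
    rw [div_mul_eq_mul_div, div_lt_one (by positivity)]; linarith
  have hvinj : InjOn v (Finset.range (n+1)) := by
    intro i _ j _ hij
    simp only [hv] at hij
    rw [div_eq_div_iff (by positivity) (by positivity)] at hij
    have h2 : (M + 2) ≠ 0 := by positivity
    have : (j:ℝ) = i := by
      have := mul_left_cancel₀ h2 ((one_mul _).symm.trans (hij.trans (one_mul _)))
      linarith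
    exact_mod_cast this.symm
  set L : ℕ → ℝ := fun i => (Lagrange.basis (Finset.range (n+1)) v i).eval 1
  have hLsum : ∑ i ∈ Finset.range (n+1), L i = 1 := by
    have := congrArg (Polynomial.eval 1) (Lagrange.sum_basis hvinj ⟨0, by simp⟩)
    rw [Polynomial.eval_finsetSum] at this
    simpa using this
  have hinterp : ∀ x, (1 + D x : W →L[ℝ] W).det
      = ∑ i ∈ Finset.range (n+1), L i * (1 + v i • D x : W →L[ℝ] W).det := by
    intro x
    obtain ⟨p, hpd, hp⟩ := brw_det_poly (D x)
    have h1 := Lagrange.eq_interpolate (f := p) hvinj (by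
      rw [Finset.card_range]
      exact (Polynomial.degree_le_natDegree).trans_lt (by exact_mod_cast Nat.lt_succ_of_le hpd))
    have h2 := congrArg (Polynomial.eval 1) h1
    rw [Lagrange.interpolate_apply, Polynomial.eval_finsetSum, hp, one_smul] at h2
    rw [h2]
    refine Finset.sum_congr rfl fun i _ => ?_
    rw [Polynomial.eval_mul, Polynomial.eval_C, hp, mul_comm]
  have hIntgr : ∀ i, IntegrableOn (fun x => (1 + v i • D x : W →L[ℝ] W).det)
      (Metric.ball (0:W) 1) := by
    intro i
    refine IntegrableOn.mono_set (ContinuousOn.integrableOn_compact hcomp ?_) hbc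
    refine ContinuousLinearMap.continuous_det.comp_continuousOn ?_
    have hDb := hDc.mono hBU
    fun_prop
  have hzero : ∀ x ∈ Metric.ball (0:W) 1, (1 + D x : W →L[ℝ] W).det = 0 := by
    intro x hx
    have hdr : HasFDerivAt r (1 + D x) x := by
      have := (hasFDerivAt_id x).add (hDs x (hBU (hbc hx))).hasFDerivAt
      refine this.congr_of_eventuallyEq (Eventually.of_forall fun y => ?_)
      simp [hh]
    have hns : HasFDerivAt (fun y => ‖r y‖ ^ 2) _ x := hdr.norm_sq
    have hcst : HasFDerivAt (fun y => ‖r y‖ ^ 2) (0 : W →L[ℝ] ℝ) x := by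
      refine (hasFDerivAt_const (1:ℝ) x).congr_of_eventuallyEq ?_
      filter_upwards [Metric.isOpen_ball.mem_nhds hx] with y hy
      rw [hn y (hbc hy), one_pow]
    have heq := hns.unique hcst
    by_contra hdet
    have hu := (LinearMap.isUnit_iff_isUnit_det ((1 + D x : W →L[ℝ] W) : W →ₗ[ℝ] W)).2
              (isUnit_iff_ne_zero.2 hdet)
    have hsurj := (LinearMap.range_eq_top.1 ((LinearMap.isUnit_iff_range_eq_top _).1 hu))
    obtain ⟨w, hw⟩ := hsurj (r x)
    have h3 := DFunLike.congr_fun heq w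
    have hw' : (1 + D x : W →L[ℝ] W) w = r x := hw
    simp only [smul_apply, ContinuousLinearMap.comp_apply, hw',
      innerSL_apply_apply, real_inner_self_eq_norm_sq, hn x (hbc hx)] at h3
    norm_num at h3
  have hfin : (volume : Measure W).real (Metric.ball (0:W) 1) = 0 := by
    have h1 : ∫ x in Metric.ball (0:W) 1, (1 + D x : W →L[ℝ] W).det = 0 := by
      rw [setIntegral_congr_fun Metric.isOpen_ball.measurableSet hzero]; simp
    simp_rw [hinterp] at h1
    rw [integral_finsetSum _ (fun i _ => (hIntgr i).const_mul _)] at h1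
    simp_rw [integral_const_mul] at h1
    rw [Finset.sum_congr rfl (fun i _ => by rw [key (v i) (hvpos i) (hv1 i) (hvM i)]),
      ← Finset.sum_mul, hLsum, one_mul] at h1
    exact h1
  have := Metric.measure_ball_pos (volume : Measure W) (0:W) one_pos
  rw [measureReal_def, ENNReal.toReal_eq_zero_iff] at hfin
  rcases hfin with h0 | h0
  · exact this.ne' h0
  · exact measure_ball_lt_top.ne h0

lemma brw_smooth (g : W → W) (hg : ContDiff ℝ 1 g) (hb : ∀ x, ‖g x‖ < 1) : ∃ x, g x = x := by
  borelize W
  by_contra! hne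
  set u : W → W := fun x => x - g x with hu
  have hu0 : ∀ x, u x ≠ 0 := fun x h => hne x (sub_eq_zero.1 h).symm
  have hun : ∀ x, 0 < ‖u x‖ ^ 2 := fun x => by have := norm_pos_iff.2 (hu0 x); positivity
  have huc : ContDiff ℝ 1 u := contDiff_id.sub hg
  set p : W → ℝ := fun x => inner ℝ x (u x) with hp
  have hpc : ContDiff ℝ 1 p := contDiff_id.inner ℝ huc
  have hnc : ContDiff ℝ 1 (fun x => ‖u x‖ ^ 2) := huc.norm_sq ℝ
  set d : W → ℝ := fun x => p x ^ 2 + ‖u x‖ ^ 2 * (1 - ‖x‖ ^ 2) with hd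
  have hdc : ContDiff ℝ 1 d :=
    (hpc.pow 2).add (hnc.mul (contDiff_const.sub (contDiff_id.norm_sq ℝ)))
  have hp1 : ∀ x : W, ‖x‖ = 1 → 0 < p x := by
    intro x hx
    simp only [hp, hu, inner_sub_right, real_inner_self_eq_norm_sq, hx]
    have := real_inner_le_norm x (g x)
    rw [hx] at this
    have := hb x
    linarith
  have hdpos : ∀ x ∈ Metric.closedBall (0:W) 1, 0 < d x := by
    intro x hx
    rw [mem_closedBall_zero_iff] at hx
    rcases hx.lt_or_eq with h | h
    · have h1 : 0 < 1 - ‖x‖ ^ 2 := by nlinarith [norm_nonneg x]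
      have := mul_pos (hun x) h1
      simp only [hd]
      nlinarith [sq_nonneg (p x)]
    · have := hp1 x h
      simp only [hd, h]
      norm_num
      positivity
  set s : W → ℝ := fun x => (-p x + Real.sqrt (d x)) / ‖u x‖ ^ 2 with hs
  have hquad : ∀ x ∈ Metric.closedBall (0:W) 1, ‖x + s x • u x‖ = 1 := by
    intro x hx
    have h1 : ‖x + s x • u x‖ ^ 2 = 1 := by
      rw [norm_add_sq_real, inner_smul_right, norm_smul, mul_pow, Real.norm_eq_abs, sq_abs]
      have hsx : s x * ‖u x‖ ^ 2 = -p x + Real.sqrt (d x) := by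
        simp only [hs]; exact div_mul_cancel₀ _ (hun x).ne'
      have hsq : Real.sqrt (d x) ^ 2 = d x := Real.sq_sqrt (hdpos x hx).le
      have hp' : inner ℝ x (u x) = p x := rfl
      rw [hp']
      have h3 : ‖u x‖ ^ 2 * (‖x‖ ^ 2 + 2 * (s x * p x) + s x ^ 2 * ‖u x‖ ^ 2 - 1) = 0 := by
        have h4 : (s x * ‖u x‖ ^ 2 + p x) ^ 2 = p x ^ 2 + ‖u x‖ ^ 2 * (1 - ‖x‖ ^ 2) := by
          rw [hsx]; rw [← hd] at *
          simpa using hsq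
        linear_combination h4
      have := (mul_eq_zero.1 h3).resolve_left (hun x).ne'
      linarith
    exact (pow_eq_one_iff_of_nonneg (norm_nonneg _) two_ne_zero).1 h1
  refine brw_no_retract (fun x => x + s x • u x) {x | 0 < d x}
    (isOpen_lt continuous_const hdc.continuous) hdpos ?_ hquad ?_
  · refine contDiffOn_id.add (ContDiffOn.smul ?_ huc.contDiffOn)
    refine ContDiffOn.div (hpc.neg.contDiffOn.add ?_) hnc.contDiffOn (fun x _ => (hun x).ne')
    exact hdc.contDiffOn.sqrt (fun x hx => ne_of_gt hx)
  · intro x hx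
    have h1 : s x = 0 := by
      have := hp1 x hx
      simp only [hs, hd, hx]
      norm_num
      left
      rw [Real.sqrt_sq this.le]; ring
    simp [h1]

theorem brw_brouwer (f : W → W) (hf : Continuous f) (hb : ∀ x, ‖f x‖ ≤ 1) : ∃ x, f x = x := by
  have happ : ∀ ε > 0, ∃ x ∈ Metric.closedBall (0:W) 1, ‖f x - x‖ ≤ 2 * ε := by
    intro ε hε
    obtain ⟨g, hg, hgf, -⟩ := hf.exists_contDiff_approx 1 (ε := fun _ => ε) continuous_const
      (fun _ => hε)
    have hgn : ∀ x, ‖g x‖ < 1 + ε := fun x => by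
      have h1 := hgf x
      rw [dist_eq_norm] at h1
      have h2 : ‖g x‖ ≤ ‖g x - f x‖ + ‖f x‖ := norm_le_norm_sub_add _ _
      linarith [hb x]
    obtain ⟨x, hx⟩ := brw_smooth (fun x => (1 + ε)⁻¹ • g x) (contDiff_const.smul hg) (fun x => by
      rw [norm_smul, norm_inv, Real.norm_of_nonneg (by linarith), inv_mul_lt_iff₀ (by linarith)]
      simpa using hgn x)
    have hgx : g x = (1 + ε) • x := by
      rw [← hx, smul_smul, mul_inv_cancel₀ (by linarith), one_smul, hx]
    have hxn : ‖x‖ ≤ 1 := by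
      have := hgn x
      rw [hgx, norm_smul, Real.norm_of_nonneg (by linarith)] at this
      by_contra! hc
      nlinarith
    refine ⟨x, by simpa using hxn, ?_⟩
    have h1 := hgf x
    rw [dist_eq_norm, norm_sub_rev] at h1
    have h2 : f x - x = (f x - g x) + ε • x := by rw [hgx, add_smul, one_smul]; abel
    rw [h2]
    refine (norm_add_le _ _).trans ?_
    rw [norm_smul, Real.norm_of_nonneg hε.le]
    nlinarith
  have hcomp : IsCompact (Metric.closedBall (0:W) 1) := isCompact_closedBall 0 1
  obtain ⟨x, hx, hmin⟩ := hcomp.exists_isMinOn ⟨0, by simp⟩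
    (hf.sub continuous_id).norm.continuousOn
  refine ⟨x, ?_⟩
  by_contra hne
  have hpos : 0 < ‖f x - x‖ := norm_pos_iff.2 (sub_ne_zero.2 hne)
  obtain ⟨y, hy, hyn⟩ := happ (‖f x - x‖ / 4) (by positivity)
  have : ‖f x - x‖ ≤ ‖f y - y‖ := hmin hy
  linarith
end Brouwer

/-- Schauder fixed point theorem for a continuous map with relatively compact range. -/
theorem schauder_range {X : Type*} [NormedAddCommGroup X] [NormedSpace ℝ X]
    (G : X → X) (hG : Continuous G) (K : Set X) (hK : IsCompact K) (hGK : ∀ x, G x ∈ K) :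
    ∃ x, G x = x := by
  have happ : ∀ ε > 0, ∃ z, ‖G z - z‖ ≤ ε := by
    intro ε hε
    obtain ⟨t, -, htf, htc⟩ := hK.finite_cover_balls hε
    have : Fintype t := htf.fintype
    set φ : t → X → ℝ := fun i y => max 0 (ε - ‖y - i‖) with hφ
    have hφc : ∀ i, Continuous (φ i) := fun i => by fun_prop
    have hφ0 : ∀ i y, 0 ≤ φ i y := fun i y => le_max_left _ _
    set S : X → ℝ := fun y => ∑ i, φ i y with hS
    have hSpos : ∀ y ∈ K, 0 < S y := by
      intro y hy
      obtain ⟨i, hi, hyi⟩ := mem_iUnion₂.1 (htc hy)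
      rw [Metric.mem_ball, dist_eq_norm] at hyi
      refine Finset.sum_pos' (fun i _ => hφ0 i y) ⟨⟨i, hi⟩, Finset.mem_univ _, ?_⟩
      simp only [hφ]
      exact lt_max_of_lt_right (by linarith)
    set comb : EuclideanSpace ℝ t → X := fun x => ∑ i, x i • (i : X) with hcomb
    have hcombc : Continuous comb := by fun_prop
    set f : EuclideanSpace ℝ t → EuclideanSpace ℝ t :=
      fun x => WithLp.toLp 2 (fun i => φ i (G (comb x)) / S (G (comb x))) with hf
    have hfc : Continuous f := by
      refine (PiLp.continuous_toLp 2 _).comp (continuous_pi fun i => ?_)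
      refine Continuous.div ((hφc i).comp (hG.comp hcombc)) ?_
        (fun x => (hSpos _ (hGK _)).ne')
      exact (continuous_finsetSum _ fun i _ => hφc i).comp (hG.comp hcombc)
    have hsum1 : ∀ y ∈ K, ∑ i, φ i y / S y = 1 := fun y hy => by
      rw [← Finset.sum_div]; exact div_self (hSpos y hy).ne'
    have hfb : ∀ x, ‖f x‖ ≤ 1 := by
      intro x
      rw [EuclideanSpace.norm_eq]
      refine Real.sqrt_le_one.2 ?_
      rw [← hsum1 _ (hGK (comb x))]
      refine Finset.sum_le_sum fun i _ => ?_
      have h0 : 0 ≤ φ i (G (comb x)) / S (G (comb x)) := div_nonneg (hφ0 _ _) (hSpos _ (hGK _)).le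
      have h1 : φ i (G (comb x)) / S (G (comb x)) ≤ 1 := by
        rw [div_le_one (hSpos _ (hGK _))]
        exact Finset.single_le_sum (fun i _ => hφ0 i _) (Finset.mem_univ i)
      simp only [hf, Real.norm_eq_abs, sq_abs]
      nlinarith
    obtain ⟨x, hx⟩ := brw_brouwer f hfc hfb
    refine ⟨comb x, ?_⟩
    set y := G (comb x) with hy
    have hyK : y ∈ K := hGK _
    have hxi : ∀ i, x i = φ i y / S y := fun i => by conv_lhs => rw [← hx]
    have h1 : y - comb x = ∑ i, (φ i y / S y) • (y - (i : X)) := by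
      simp only [smul_sub, Finset.sum_sub_distrib, ← Finset.sum_smul, hsum1 y hyK, one_smul, hcomb,
        hxi]
    rw [h1]
    refine (norm_sum_le _ _).trans ?_
    calc ∑ i, ‖(φ i y / S y) • (y - (i : X))‖ ≤ ∑ i, (φ i y / S y) * ε := by
          refine Finset.sum_le_sum fun i _ => ?_
          have h0 : 0 ≤ φ i y / S y := div_nonneg (hφ0 _ _) (hSpos _ hyK).le
          rw [norm_smul, Real.norm_of_nonneg h0]
          by_cases hi : ‖y - (i : X)‖ ≤ ε
          · gcongr
          · have : φ i y = 0 := max_eq_left (by linarith)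
            simp [this]
      _ = ε := by rw [← Finset.sum_mul, hsum1 y hyK, one_mul]
  -- pass to the limit
  choose z hz using fun n : ℕ => happ (1 / ((n:ℝ) + 1)) Nat.one_div_pos_of_nat
  obtain ⟨a, -, ψ, hψ, hlim⟩ := hK.tendsto_subseq (fun n => hGK (z n))
  have h0 : Tendsto (fun n => G (z (ψ n)) - z (ψ n)) atTop (𝓝 0) := by
    refine squeeze_zero_norm (fun n => hz (ψ n)) ?_
    exact tendsto_one_div_add_atTop_nhds_zero_nat.comp hψ.tendsto_atTop
  have hzl : Tendsto (fun n => z (ψ n)) atTop (𝓝 a) := by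
    have := hlim.sub h0
    simpa using this
  exact ⟨a, tendsto_nhds_unique ((hG.tendsto a).comp hzl) hlim⟩

/-- Schauder fixed point theorem on a closed ball. -/
theorem schauder_ball {X : Type*} [NormedAddCommGroup X] [NormedSpace ℝ X]
    (G : X → X) (hG : Continuous G) (ρ : ℝ) (hρ : 0 < ρ) (K : Set X) (hK : IsCompact K)
    (hGK : ∀ x, ‖x‖ ≤ ρ → G x ∈ K) (hGb : ∀ x, ‖x‖ ≤ ρ → ‖G x‖ ≤ ρ) :
    ∃ x, G x = x := by
  set P : X → X := fun x => (ρ / max ρ ‖x‖) • x with hP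
  have hm : ∀ x : X, 0 < max ρ ‖x‖ := fun x => lt_max_of_lt_left hρ
  have hPc : Continuous P :=
    (continuous_const.div (continuous_const.max continuous_norm) (fun x => (hm x).ne')).smul
      continuous_id
  have hPn : ∀ x, ‖P x‖ ≤ ρ := fun x => by
    simp only [hP]
    rw [norm_smul, Real.norm_of_nonneg (div_nonneg hρ.le (hm x).le), div_mul_eq_mul_div,
      div_le_iff₀ (hm x)]
    exact mul_le_mul_of_nonneg_left (le_max_right _ _) hρ.le
  obtain ⟨x, hx⟩ := schauder_range (fun x => G (P x)) (hG.comp hPc) K hK (fun x => hGK _ (hPn x))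
  have hxn : ‖x‖ ≤ ρ := by rw [← hx]; exact hGb _ (hPn x)
  have hPx : P x = x := by
    simp only [hP, max_eq_left hxn, div_self hρ.ne', one_smul]
  refine ⟨x, ?_⟩
  rw [hPx] at hx
  exact hx

section EvolK

lemma evk_isCompact_dom (T : ℝ) : IsCompact (evolDomain T) := by
  refine IsCompact.of_isClosed_subset (isCompact_Icc.prod isCompact_Icc :
    IsCompact (Icc (0:ℝ) T ×ˢ Icc (0:ℝ) T)) ?_ ?_
  · refine (isClosed_le continuous_const continuous_snd).inter
      ((isClosed_le continuous_snd continuous_fst).inter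
        (isClosed_le continuous_fst continuous_const))
  · rintro ⟨t, s⟩ ⟨h1, h2, h3⟩
    exact ⟨⟨h1.trans h2, h3⟩, ⟨h1, h2.trans h3⟩⟩

lemma evk_joint {E : Type*} [NormedAddCommGroup E] [NormedSpace ℝ E] {T : ℝ}
    {R : ℝ → ℝ → E →L[ℝ] E} (hR : IsEvolutionSystem T R)
    (hb : ∀ s t : ℝ, 0 ≤ s → s ≤ t → t ≤ T → ‖R t s‖ ≤ 1) :
    ContinuousOn (fun q : (ℝ × ℝ) × E => R q.1.1 q.1.2 q.2) (evolDomain T ×ˢ (univ : Set E)) := by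
  rintro ⟨p0, y0⟩ ⟨hp0, -⟩
  have h1 : Tendsto (fun q : (ℝ × ℝ) × E => R q.1.1 q.1.2 y0)
      (𝓝[evolDomain T ×ˢ (univ : Set E)] (p0, y0)) (𝓝 (R p0.1 p0.2 y0)) := by
    have h2 := hR.strong_cont y0 p0 hp0
    have h3 : Tendsto (fun q : (ℝ × ℝ) × E => q.1)
        (𝓝[evolDomain T ×ˢ (univ : Set E)] (p0, y0)) (𝓝[evolDomain T] p0) := by
      refine tendsto_nhdsWithin_iff.2 ⟨?_, ?_⟩
      · exact (continuous_fst.tendsto (p0, y0)).mono_left nhdsWithin_le_nhds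
      · filter_upwards [self_mem_nhdsWithin] with q hq using hq.1
    exact h2.tendsto.comp h3
  have h4 : Tendsto (fun q : (ℝ × ℝ) × E => R q.1.1 q.1.2 (q.2 - y0))
      (𝓝[evolDomain T ×ˢ (univ : Set E)] (p0, y0)) (𝓝 0) := by
    have h5 : Tendsto (fun q : (ℝ × ℝ) × E => ‖q.2 - y0‖)
        (𝓝[evolDomain T ×ˢ (univ : Set E)] (p0, y0)) (𝓝 0) := by
      have : Continuous (fun q : (ℝ × ℝ) × E => ‖q.2 - y0‖) := by fun_prop
      have h := (this.tendsto (p0, y0)).mono_left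
        (nhdsWithin_le_nhds (s := evolDomain T ×ˢ (univ : Set E)))
      simpa using h
    refine squeeze_zero_norm' ?_ h5
    filter_upwards [self_mem_nhdsWithin] with q hq
    refine ((R q.1.1 q.1.2).le_opNorm _).trans ?_
    have := hb _ _ hq.1.1 hq.1.2.1 hq.1.2.2
    nlinarith [norm_nonneg (q.2 - y0)]
  have h6 := h4.add h1
  have h7 : ContinuousWithinAt (fun q : (ℝ × ℝ) × E => R q.1.1 q.1.2 (q.2 - y0) + R q.1.1 q.1.2 y0)
      (evolDomain T ×ˢ (univ : Set E)) (p0, y0) := by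
    simpa [ContinuousWithinAt] using h6
  refine h7.congr (fun q _ => ?_) ?_
  · simp
  · simp

variable {E : Type*} [NormedAddCommGroup E] [NormedSpace ℝ E] [CompleteSpace E]
  {T : ℝ} {R : ℝ → ℝ → E →L[ℝ] E}

lemma evk_integrand (hR : IsEvolutionSystem T R)
    (hb : ∀ s t : ℝ, 0 ≤ s → s ≤ t → t ≤ T → ‖R t s‖ ≤ 1) {w : ℝ → E}
    (hw : ContinuousOn w (Icc 0 T)) {t : ℝ} (ht : t ≤ T) :
    ContinuousOn (fun s => R t s (w s)) (Icc 0 t) := by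
  have h1 : ContinuousOn (fun s => (((t, s) : ℝ × ℝ), w s)) (Icc 0 t) := by
    refine ContinuousOn.prodMk (by fun_prop) (hw.mono (Icc_subset_Icc_right ht))
  exact (evk_joint hR hb).comp h1 (fun s hs => ⟨⟨hs.1, hs.2, ht⟩, mem_univ _⟩)

lemma evk_intervalIntegrable (hR : IsEvolutionSystem T R)
    (hb : ∀ s t : ℝ, 0 ≤ s → s ≤ t → t ≤ T → ‖R t s‖ ≤ 1) {w : ℝ → E}
    (hw : ContinuousOn w (Icc 0 T)) {t a b : ℝ} (ht : t ≤ T) (ha : 0 ≤ a) (hab : a ≤ b)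
    (hbt : b ≤ t) : IntervalIntegrable (fun s => R t s (w s)) volume a b := by
  refine ContinuousOn.intervalIntegrable ?_
  rw [uIcc_of_le hab]
  exact (evk_integrand hR hb hw ht).mono (Icc_subset_Icc ha hbt)

lemma evk_step (hR : IsEvolutionSystem T R)
    (hb : ∀ s t : ℝ, 0 ≤ s → s ≤ t → t ≤ T → ‖R t s‖ ≤ 1) {w : ℝ → E}
    (hw : ContinuousOn w (Icc 0 T)) (x : E) {t t' : ℝ} (ht0 : 0 ≤ t) (htt : t ≤ t') (ht : t' ≤ T) :
    evolMap R x w t' = R t' t (evolMap R x w t) + ∫ s in t..t', R t' s (w s) := by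
  unfold evolMap
  rw [map_add, ← intervalIntegral.integral_add_adjacent_intervals
      (evk_intervalIntegrable hR hb hw ht le_rfl ht0 htt)
      (evk_intervalIntegrable hR hb hw ht ht0 htt le_rfl),
    ← (R t' t).intervalIntegral_comp_comm
      (evk_intervalIntegrable hR hb hw (htt.trans ht) le_rfl ht0 le_rfl),
    hR.comp le_rfl ht0 htt ht, ContinuousLinearMap.comp_apply, add_assoc]
  congr 2
  refine intervalIntegral.integral_congr fun s hs => ?_
  rw [uIcc_of_le ht0] at hs
  rw [hR.comp hs.1 hs.2 htt ht, ContinuousLinearMap.comp_apply]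

lemma evk_int_mem (hR : IsEvolutionSystem T R)
    (hb : ∀ s t : ℝ, 0 ≤ s → s ≤ t → t ≤ T → ‖R t s‖ ≤ 1) {w : ℝ → E}
    (hw : ContinuousOn w (Icc 0 T)) (Z : Set E) (hZc : IsClosed Z) (hZ : Convex ℝ Z)
    (hmem : ∀ t s, 0 ≤ s → s ≤ t → t ≤ T → R t s (w s) ∈ Z) {t : ℝ} (ht0 : 0 ≤ t) (ht : t ≤ T) :
    ∃ z ∈ Z, (∫ s in (0:ℝ)..t, R t s (w s)) = t • z := by
  rcases ht0.eq_or_lt with h | h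
  · subst h
    exact ⟨R 0 0 (w 0), hmem 0 0 le_rfl le_rfl ht, by simp⟩
  · refine ⟨⨍ s in (0:ℝ)..t, R t s (w s), ?_, ?_⟩
    · refine hZ.set_average_mem hZc ?_ ?_ ?_ ?_
      · rw [uIoc_of_le ht0]; simp [h]
      · rw [uIoc_of_le ht0]; simp
      · rw [uIoc_of_le ht0]
        filter_upwards [ae_restrict_mem measurableSet_Ioc] with s hs
        exact hmem t s hs.1.le hs.2 ht
      · rw [uIoc_of_le ht0]
        exact (evk_intervalIntegrable hR hb hw ht le_rfl ht0 le_rfl).1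
    · rw [interval_average_eq, sub_zero, smul_smul, mul_inv_cancel₀ h.ne', one_smul]

lemma evk_equi (hR : IsEvolutionSystem T R)
    (hb : ∀ s t : ℝ, 0 ≤ s → s ≤ t → t ≤ T → ‖R t s‖ ≤ 1) (hT : 0 < T)
    (B : E →L[ℝ] E) (C : Set E) (hC : IsCompact C) :
    ∃ D : Set E, IsCompact D ∧
      (∀ w : ℝ → E, ContinuousOn w (Icc 0 T) → (∀ s ∈ Icc 0 T, w s ∈ C) → ∀ t ∈ Icc 0 T,
        evolMap R (B (∫ s in (0:ℝ)..T, R T s (w s))) w t ∈ D) ∧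
      ∀ ε > 0, ∃ δ > 0, ∀ w : ℝ → E, ContinuousOn w (Icc 0 T) → (∀ s ∈ Icc 0 T, w s ∈ C) →
        ∀ t ∈ Icc 0 T, ∀ t' ∈ Icc 0 T, |t - t'| < δ →
        ‖evolMap R (B (∫ s in (0:ℝ)..T, R T s (w s))) w t
          - evolMap R (B (∫ s in (0:ℝ)..T, R T s (w s))) w t'‖ < ε := by
  have hj := evk_joint hR hb
  have hcimg : ∀ Q : Set E, IsCompact Q →
      IsCompact ((fun q : (ℝ × ℝ) × E => R q.1.1 q.1.2 q.2) '' (evolDomain T ×ˢ Q)) := fun Q hQ =>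
    ((evk_isCompact_dom T).prod hQ).image_of_continuousOn
      (hj.mono (prod_mono le_rfl (subset_univ _)))
  set Z0 := (fun q : (ℝ × ℝ) × E => R q.1.1 q.1.2 q.2) '' (evolDomain T ×ˢ C) with hZ0
  set Z := closure (convexHull ℝ Z0) with hZdef
  have hZcomp : IsCompact Z :=
    (totallyBounded_convexHull.2 (hcimg C hC).totallyBounded).closure.isCompact_of_isClosed
      isClosed_closure
  have hZconv : Convex ℝ Z := (convex_convexHull ℝ Z0).closure
  set Z' := (fun q : ℝ × E => q.1 • q.2) '' (Icc 0 T ×ˢ Z) with hZ'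
  have hZ'c : IsCompact Z' := (isCompact_Icc.prod hZcomp).image (by fun_prop)
  have hI : ∀ w : ℝ → E, ContinuousOn w (Icc 0 T) → (∀ s ∈ Icc 0 T, w s ∈ C) → ∀ t ∈ Icc 0 T,
      (∫ s in (0:ℝ)..t, R t s (w s)) ∈ Z' := by
    intro w hw hwC t ht
    obtain ⟨z, hz, h⟩ := evk_int_mem hR hb hw Z isClosed_closure hZconv
      (fun t s h0 hst htT => subset_closure (subset_convexHull ℝ Z0
        ⟨((t, s), w s), ⟨⟨h0, hst, htT⟩, hwC s ⟨h0, hst.trans htT⟩⟩, rfl⟩)) ht.1 ht.2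
    rw [h]
    exact ⟨(t, z), ⟨ht, hz⟩, rfl⟩
  set Y := (fun q : (ℝ × ℝ) × E => R q.1.1 q.1.2 q.2) '' (evolDomain T ×ˢ (B '' Z')) with hY
  have hYc : IsCompact Y := hcimg _ (hZ'c.image B.continuous)
  set D := (fun q : E × E => q.1 + q.2) '' (Y ×ˢ Z') with hD
  have hDc : IsCompact D := (hYc.prod hZ'c).image (by fun_prop)
  have hmemD : ∀ w : ℝ → E, ContinuousOn w (Icc 0 T) → (∀ s ∈ Icc 0 T, w s ∈ C) → ∀ t ∈ Icc 0 T,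
        evolMap R (B (∫ s in (0:ℝ)..T, R T s (w s))) w t ∈ D := by
    intro w hw hwC t ht
    refine ⟨(R t 0 (B (∫ s in (0:ℝ)..T, R T s (w s))), ∫ s in (0:ℝ)..t, R t s (w s)), ⟨?_, ?_⟩, rfl⟩
    · exact ⟨((t, 0), B (∫ s in (0:ℝ)..T, R T s (w s))), ⟨⟨le_rfl, ht.1, ht.2⟩,
        mem_image_of_mem _ (hI w hw hwC T ⟨hT.le, le_rfl⟩)⟩, rfl⟩
    · exact hI w hw hwC t ht
  refine ⟨D, hDc, hmemD, ?_⟩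
  intro ε hε
  have huc : UniformContinuousOn (fun q : (ℝ × ℝ) × E => R q.1.1 q.1.2 q.2) (evolDomain T ×ˢ D) :=
    ((evk_isCompact_dom T).prod hDc).uniformContinuousOn_of_continuous
      (hj.mono (prod_mono le_rfl (subset_univ _)))
  rw [Metric.uniformContinuousOn_iff] at huc
  obtain ⟨δ1, hδ1, huc⟩ := huc (ε / 2) (by positivity)
  obtain ⟨M, hM⟩ := hC.exists_bound_of_continuousOn (f := id) continuousOn_id
  set M' := max M 0 + 1 with hM'
  have hM'pos : 0 < M' := by have := le_max_right M 0; linarith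
  have hCM : ∀ y ∈ C, ‖y‖ ≤ M' := fun y hy =>
    (hM y hy).trans (by have := le_max_left M 0; linarith)
  refine ⟨min δ1 (ε / (2 * M')), lt_min hδ1 (by positivity), ?_⟩
  intro w hw hwC
  set u := evolMap R (B (∫ s in (0:ℝ)..T, R T s (w s))) w with hu
  have main : ∀ t ∈ Icc 0 T, ∀ t' ∈ Icc 0 T, t ≤ t' → |t - t'| < min δ1 (ε / (2 * M')) →
      ‖u t - u t'‖ < ε := by
    intro t ht t' ht' htt hlt
    have hstep := evk_step hR hb hw (B (∫ s in (0:ℝ)..T, R T s (w s))) ht.1 htt ht'.2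
    rw [← hu] at hstep
    have h1 := huc ((t', t), u t) ⟨⟨ht.1, htt, ht'.2⟩, hmemD w hw hwC t ht⟩
      ((t, t), u t) ⟨⟨ht.1, le_rfl, ht.2⟩, hmemD w hw hwC t ht⟩ (by
        simp only [Prod.dist_eq, dist_self, Real.dist_eq, abs_sub_comm t' t]
        simpa using hlt.trans_le (min_le_left _ _))
    simp only [hR.refl t ht, one_apply_eq_self, dist_eq_norm] at h1
    have h2 : ‖∫ s in t..t', R t' s (w s)‖ ≤ M' * |t' - t| := by
      refine intervalIntegral.norm_integral_le_of_norm_le_const fun s hs => ?_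
      rw [uIoc_of_le htt] at hs
      have h0s : 0 ≤ s := ht.1.trans hs.1.le
      refine ((R t' s).le_opNorm _).trans ?_
      have h3 := hb s t' h0s hs.2 ht'.2
      have h4 := hCM _ (hwC s ⟨h0s, hs.2.trans ht'.2⟩)
      calc ‖R t' s‖ * ‖w s‖ ≤ 1 * M' := by gcongr
        _ = M' := one_mul _
    have h5 : M' * |t' - t| < ε / 2 := by
      have := hlt.trans_le (min_le_right _ _)
      rw [abs_sub_comm] at this
      calc M' * |t' - t| < M' * (ε / (2 * M')) := by gcongr
        _ = ε / 2 := by field_simp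
    rw [norm_sub_rev, hstep, add_sub_right_comm]
    refine (norm_add_le _ _).trans_lt ?_
    linarith
  intro t ht t' ht' hlt
  rcases le_total t t' with h | h
  · exact main t ht t' ht' h hlt
  · rw [norm_sub_rev]
    exact main t' ht' t ht h (by rwa [abs_sub_comm])

lemma evk_exists_K (hR : IsEvolutionSystem T R)
    (hb : ∀ s t : ℝ, 0 ≤ s → s ≤ t → t ≤ T → ‖R t s‖ ≤ 1) (hT : 0 < T)
    (B : E →L[ℝ] E) :
    ∃ K : C(Icc (0:ℝ) T, E) →L[ℝ] C(Icc (0:ℝ) T, E),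
      (∀ (w : C(Icc (0:ℝ) T, E)) (t : Icc (0:ℝ) T), K w t =
        evolMap R (B (∫ s in (0:ℝ)..T, R T s (IccExtend hT.le w s))) (IccExtend hT.le w) t) ∧
      ∀ C : Set E, IsCompact C → ∃ Q : Set C(Icc (0:ℝ) T, E), IsCompact Q ∧
        ∀ w : C(Icc (0:ℝ) T, E), (∀ t, w t ∈ C) → K w ∈ Q := by
  have hext : ∀ w : C(Icc (0:ℝ) T, E), ContinuousOn (IccExtend hT.le w) (Icc 0 T) := fun w =>
    (w.continuous.Icc_extend').continuousOn
  set sol : C(Icc (0:ℝ) T, E) → ℝ → E := fun w =>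
    evolMap R (B (∫ s in (0:ℝ)..T, R T s (IccExtend hT.le w s))) (IccExtend hT.le w) with hsol
  have hcont : ∀ w, Continuous (fun t : Icc (0:ℝ) T => sol w t) := by
    intro w
    obtain ⟨D, -, -, h⟩ := evk_equi hR hb hT B (range w) (isCompact_range w.continuous)
    rw [Metric.continuous_iff]
    intro t ε hε
    obtain ⟨δ, hδ, h⟩ := h ε hε
    refine ⟨δ, hδ, fun t' htt' => ?_⟩
    rw [dist_eq_norm]
    exact h _ (hext w) (fun s _ => ⟨_, rfl⟩) t' t'.2 t t.2 htt'
  have hIntgr : ∀ (w : C(Icc (0:ℝ) T, E)) (t : ℝ), t ∈ Icc 0 T →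
      IntervalIntegrable (fun s => R t s (IccExtend hT.le w s)) volume 0 t := fun w t ht =>
    evk_intervalIntegrable hR hb (hext w) ht.2 le_rfl ht.1 le_rfl
  have hIadd : ∀ (w w' : C(Icc (0:ℝ) T, E)) (t : ℝ), t ∈ Icc 0 T →
      (∫ s in (0:ℝ)..t, R t s (IccExtend hT.le (⇑(w + w')) s))
      = (∫ s in (0:ℝ)..t, R t s (IccExtend hT.le w s))
        + ∫ s in (0:ℝ)..t, R t s (IccExtend hT.le w' s) := by
    intro w w' t ht
    rw [← intervalIntegral.integral_add (hIntgr w t ht) (hIntgr w' t ht)]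
    simp [IccExtend]
  have hIsmul : ∀ (c : ℝ) (w : C(Icc (0:ℝ) T, E)) (t : ℝ),
      (∫ s in (0:ℝ)..t, R t s (IccExtend hT.le (⇑(c • w)) s))
      = c • ∫ s in (0:ℝ)..t, R t s (IccExtend hT.le w s) := by
    intro c w t
    rw [← intervalIntegral.integral_smul]
    simp [IccExtend]
  have hInorm : ∀ (w : C(Icc (0:ℝ) T, E)) (t : ℝ), t ∈ Icc 0 T →
      ‖∫ s in (0:ℝ)..t, R t s (IccExtend hT.le w s)‖ ≤ T * ‖w‖ := by
    intro w t ht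
    have h1 : ‖∫ s in (0:ℝ)..t, R t s (IccExtend hT.le w s)‖ ≤ ‖w‖ * |t - 0| := by
      refine intervalIntegral.norm_integral_le_of_norm_le_const fun s hs => ?_
      rw [uIoc_of_le ht.1] at hs
      refine ((R t s).le_opNorm _).trans ?_
      have h3 := hb s t hs.1.le hs.2 ht.2
      have h4 : ‖IccExtend hT.le w s‖ ≤ ‖w‖ := w.norm_coe_le_norm _
      calc ‖R t s‖ * ‖IccExtend hT.le w s‖ ≤ 1 * ‖w‖ := by gcongr
        _ = ‖w‖ := one_mul _
    rw [sub_zero, abs_of_nonneg ht.1] at h1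
    nlinarith [norm_nonneg w, ht.2]
  have hTm : T ∈ Icc (0:ℝ) T := ⟨hT.le, le_rfl⟩
  let K0 : C(Icc (0:ℝ) T, E) →ₗ[ℝ] C(Icc (0:ℝ) T, E) :=
    { toFun := fun w => ⟨fun t => sol w t, hcont w⟩
      map_add' := fun w w' => by
        ext t
        simp only [ContinuousMap.coe_mk, ContinuousMap.add_apply, hsol, evolMap]
        rw [hIadd w w' T hTm, hIadd w w' t t.2, map_add, map_add]
        abel
      map_smul' := fun c w => by
        ext t
        simp only [ContinuousMap.coe_mk, ContinuousMap.smul_apply, hsol, evolMap, RingHom.id_apply]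
        rw [hIsmul, hIsmul, map_smul, map_smul, smul_add] }
  refine ⟨K0.mkContinuous (‖B‖ * T + T) ?_, fun w t => rfl, ?_⟩
  · intro w
    rw [ContinuousMap.norm_le _ (by positivity)]
    intro t
    change ‖R t 0 (B (∫ s in (0:ℝ)..T, R T s (IccExtend hT.le w s)))
      + ∫ s in (0:ℝ)..t, R t s (IccExtend hT.le w s)‖ ≤ _
    refine (norm_add_le _ _).trans ?_
    have h1 := hInorm w t t.2
    have h2 := hInorm w T hTm
    have h3 : ‖R t 0 (B (∫ s in (0:ℝ)..T, R T s (IccExtend hT.le w s)))‖ ≤ 1 * (‖B‖ * (T * ‖w‖)) := by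
      refine ((R t 0).le_opNorm _).trans ?_
      refine mul_le_mul (hb 0 t le_rfl t.2.1 t.2.2) ((B.le_opNorm _).trans ?_) (norm_nonneg _) zero_le_one
      gcongr
    nlinarith
  · intro C hC
    obtain ⟨D, hD, hmem, heq⟩ := evk_equi hR hb hT B C hC
    set S : Set C(Icc (0:ℝ) T, E) := {u | ∃ w : C(Icc (0:ℝ) T, E), (∀ t, w t ∈ C) ∧ u = K0 w} with hS
    set S' : Set (BoundedContinuousFunction (Icc (0:ℝ) T) E) :=
      BoundedContinuousFunction.mkOfCompact '' S with hS'
    have hcl : IsCompact (closure S') := by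
      refine BoundedContinuousFunction.arzela_ascoli D hD S' ?_ ?_
      · rintro _ t ⟨_, ⟨w, hw, rfl⟩, rfl⟩
        exact hmem _ (hext w) (fun s _ => hw _) t t.2
      · intro t
        rw [Metric.equicontinuousAt_iff]
        intro ε hε
        obtain ⟨δ, hδ, h⟩ := heq ε hε
        refine ⟨δ, hδ, ?_⟩
        rintro t' htt ⟨_, ⟨_, ⟨w, hw, rfl⟩, rfl⟩⟩
        rw [dist_eq_norm]
        refine h _ (hext w) (fun s _ => hw _) t t.2 t' t'.2 ?_
        rw [abs_sub_comm]
        exact htt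
    refine ⟨_, hcl.image (f := (BoundedContinuousFunction.toContinuousMap :
      BoundedContinuousFunction (Icc (0:ℝ) T) E → C(Icc (0:ℝ) T, E))) ?_, ?_⟩
    · exact (ContinuousMap.isometryEquivBoundedOfCompact (Icc (0:ℝ) T) E).symm.continuous
    · intro w hw
      exact ⟨BoundedContinuousFunction.mkOfCompact (K0 w), subset_closure ⟨_, ⟨w, hw, rfl⟩, rfl⟩,
        by ext; rfl⟩

/-- The union of the images of a bounded set under a norm-continuous family of compact operators. -/
lemma evk_family_compact (Finf : ℝ → E →L[ℝ] E)
    (hFinfc : ContinuousOn Finf (Icc (0 : ℝ) T))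
    (hFinfcpt : ∀ t ∈ Icc (0 : ℝ) T, ∀ B : Set E, Bornology.IsBounded B →
      IsCompact (closure (Finf t '' B))) (ρ : ℝ) :
    ∃ C : Set E, IsCompact C ∧ ∀ t ∈ Icc (0:ℝ) T, ∀ x, ‖x‖ ≤ ρ → Finf t x ∈ C := by
  set S : Set E := {y | ∃ t ∈ Icc (0:ℝ) T, ∃ x, ‖x‖ ≤ ρ ∧ y = Finf t x} with hS
  have htb : TotallyBounded S := by
    rw [Metric.totallyBounded_iff]
    intro ε hε
    set ρ' := max ρ 0 + 1
    have hρ' : 0 < ρ' := by have := le_max_right ρ 0; simp only [ρ']; linarith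
    have hρρ' : ρ ≤ ρ' := by have := le_max_left ρ 0; simp only [ρ']; linarith
    have hic : IsCompact (Finf '' Icc (0:ℝ) T) := isCompact_Icc.image_of_continuousOn hFinfc
    obtain ⟨t, hts, htf, htc⟩ := hic.finite_cover_balls (e := ε / (2 * ρ')) (by positivity)
    have hcov : TotallyBounded (⋃ A ∈ t, A '' Metric.closedBall (0:E) ρ') := by
      refine (totallyBounded_biUnion htf).2 fun A hA => ?_
      obtain ⟨τ, hτ, rfl⟩ := hts hA
      exact (hFinfcpt τ hτ _ Metric.isBounded_closedBall).totallyBounded.subset subset_closure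
    obtain ⟨N, hNf, hN⟩ := Metric.totallyBounded_iff.1 hcov (ε / 2) (by positivity)
    refine ⟨N, hNf, ?_⟩
    rintro _ ⟨τ, hτ, x, hx, rfl⟩
    obtain ⟨A, hA, hAd⟩ := mem_iUnion₂.1 (htc (mem_image_of_mem Finf hτ))
    have h1 : A x ∈ ⋃ A ∈ t, (A : E →L[ℝ] E) '' Metric.closedBall (0:E) ρ' :=
      mem_iUnion₂.2 ⟨A, hA, x, by simpa using hx.trans hρρ', rfl⟩
    obtain ⟨y, hy, hyd⟩ := mem_iUnion₂.1 (hN h1)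
    refine mem_iUnion₂.2 ⟨y, hy, ?_⟩
    rw [Metric.mem_ball] at *
    have h2 : dist (Finf τ x) (A x) ≤ ε / 2 := by
      rw [dist_eq_norm, ← sub_apply]
      refine ((Finf τ - A).le_opNorm x).trans ?_
      rw [dist_eq_norm] at hAd
      calc ‖Finf τ - A‖ * ‖x‖ ≤ ε / (2 * ρ') * ρ' := by
            gcongr
            exact hx.trans hρρ'
        _ = ε / 2 := by field_simp
    linarith [dist_triangle (Finf τ x) (A x) y]
  exact ⟨closure S, htb.closure.isCompact_of_isClosed isClosed_closure,
    fun t ht x hx => subset_closure ⟨t, ht, x, hx, rfl⟩⟩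

end EvolK

/-- Theorem 5: if `F` is completely continuous and asymptotically linear
with compact linear part `F_∞(t)`, the linear periodic problems
`u' = λ(A(t) + F_∞(t))u`, `u(0) = u(T)`, have no nontrivial mild solution for `λ ∈ (0,1]`,
and `Ker(Â + F̂_∞) = {0}`, then `u' = A(t)u + F(t,u)` admits a `T`-periodic mild solution. -/
theorem statement_19
    {E : Type*} [NormedAddCommGroup E] [NormedSpace ℝ E] [CompleteSpace E]
    [TopologicalSpace.SeparableSpace E]
    {V : Type*} [NormedAddCommGroup V] [NormedSpace ℝ V] [CompleteSpace V]
    (ι : V →L[ℝ] E) (hιinj : Function.Injective ι) (hιdense : DenseRange ι)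
    (T : ℝ) (hT : 0 < T)
    (A : HypData E V) (ω MV ωV : ℝ)
    (hgen : HypGen T A)
    (h1 : Hyp1' T A ω)
    (h2 : Hyp2 ι T A MV ωV)
    (h3 : Hyp3 ι T A)
    (h4 : Hyp4 ι T A ω)
    (h5 : Hyp5 T A)
    -- `F` is completely continuous, satisfies (F1), (F2) and (F4)
    (F : ℝ → E → E)
    (hFc : ContinuousOn (fun p : ℝ × E => F p.1 p.2) (Icc (0 : ℝ) T ×ˢ (univ : Set E)))
    (hFcpt : ∀ B : Set E, Bornology.IsBounded B →
      IsCompact (closure {y : E | ∃ t ∈ Icc (0 : ℝ) T, ∃ x ∈ B, y = F t x}))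
    (hF1 : ∀ x : E, ∃ r > (0 : ℝ), ∃ Lc > (0 : ℝ), ∀ t ∈ Icc (0 : ℝ) T,
      ∀ x₁ ∈ Metric.ball x r, ∀ x₂ ∈ Metric.ball x r, ‖F t x₁ - F t x₂‖ ≤ Lc * ‖x₁ - x₂‖)
    (c : ℝ) (hc : 0 < c)
    (hF2 : ∀ t ∈ Icc (0 : ℝ) T, ∀ x : E, ‖F t x‖ ≤ c * (1 + ‖x‖))
    (hF4 : ∀ x : E, F 0 x = F T x)
    -- the compact linear operators `F_∞(t)`
    (Finf : ℝ → E →L[ℝ] E)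
    (hFinfc : ContinuousOn Finf (Icc (0 : ℝ) T))
    (hFinfcpt : ∀ t ∈ Icc (0 : ℝ) T, ∀ B : Set E, Bornology.IsBounded B →
      IsCompact (closure (Finf t '' B)))
    (hFinfper : Finf 0 = Finf T)
    -- the asymptotic linearity, uniformly in `t ∈ [0,T]`
    (hasym : ∀ ε > (0 : ℝ), ∃ Rr : ℝ, ∀ x : E, Rr ≤ ‖x‖ → ∀ t ∈ Icc (0 : ℝ) T,
      ‖F t x - Finf t x‖ ≤ ε * ‖x‖)
    -- `RR lam` is the evolution system determined by `{λA(t)}`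
    (RR : ℝ → ℝ → ℝ → E →L[ℝ] E)
    (hRR : ∀ lam > (0 : ℝ),
      IsDeterminedEvolSystem ι T (fun s => lam • A.bdd s) 1 (-(lam * ω)) (RR lam))
    -- the linear periodic problems have no nontrivial mild solution for `λ ∈ (0,1]`
    (hlin : ∀ lam : ℝ, 0 < lam → lam ≤ 1 → ∀ u : ℝ → E,
      ContinuousOn u (Icc (0 : ℝ) T) →
      (∀ t ∈ Icc (0 : ℝ) T, u t =
        RR lam t 0 (u 0) + lam • ∫ s in (0 : ℝ)..t, RR lam t s (Finf s (u s))) →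
      u 0 = u T → ∀ t ∈ Icc (0 : ℝ) T, u t = 0)
    -- `Ker(Â + F̂_∞) = {0}`
    (hker : ∀ (f : E → E), (∀ v : V, f (ι v) = timeAvg T A v) →
      ∀ (D' : Set E) (A' : E → E), IsClosureOf D' A' (Set.range ι) f →
        ∀ x ∈ D', A' x + ((1 / T) • ∫ τ in (0 : ℝ)..T, Finf τ) x = 0 → x = 0) :
    ∃ u : ℝ → E, ContinuousOn u (Icc (0 : ℝ) T) ∧
      (∀ t ∈ Icc (0 : ℝ) T, u t =
        RR 1 t 0 (u 0) + ∫ s in (0 : ℝ)..t, RR 1 t s (F s (u s))) ∧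
      u 0 = u T := by
  obtain ⟨hωpos, -⟩ := h1
  obtain ⟨hR, hRb, -, -⟩ := hRR 1 one_pos
  set R := RR 1 with hRdef
  have hb : ∀ s t : ℝ, 0 ≤ s → s ≤ t → t ≤ T → ‖R t s‖ ≤ 1 := by
    intro s t h0 hst ht
    refine (hRb s t h0 hst ht).trans ?_
    rw [one_mul, Real.exp_le_one_iff]
    nlinarith
  have hRT : ‖R T 0‖ < 1 := by
    refine (hRb 0 T le_rfl hT.le le_rfl).trans_lt ?_
    rw [one_mul, Real.exp_lt_one_iff]
    nlinarith
  obtain ⟨U, hU⟩ := isUnit_one_sub_of_norm_lt_one hRT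
  set B : E →L[ℝ] E := ↑U⁻¹ with hB
  have hBinv : ∀ y, B y - R T 0 (B y) = y := by
    intro y
    have h : (1 - R T 0) * B = 1 := by rw [← hU, hB, Units.mul_inv]
    have h' := DFunLike.congr_fun h y
    simpa using h'
  obtain ⟨K, hK, hKc⟩ := evk_exists_K hR hb hT B
  have hT0 : (0:ℝ) ∈ Icc (0:ℝ) T := ⟨le_rfl, hT.le⟩
  have hTT : T ∈ Icc (0:ℝ) T := ⟨hT.le, le_rfl⟩
  have hext : ∀ (w : C(Icc (0:ℝ) T, E)) (t : ℝ) (ht : t ∈ Icc (0:ℝ) T),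
      IccExtend hT.le w t = w ⟨t, ht⟩ := fun w t ht => IccExtend_of_mem hT.le w ht
  -- fixed points of `K ∘ Φ` are periodic mild solutions
  have hmild : ∀ (Φ : ℝ → E → E) (x w : C(Icc (0:ℝ) T, E)),
      (∀ t : Icc (0:ℝ) T, w t = Φ t (x t)) → K w = x →
      ContinuousOn (IccExtend hT.le x) (Icc (0:ℝ) T) ∧
      (∀ t ∈ Icc (0:ℝ) T, IccExtend hT.le x t = R t 0 (IccExtend hT.le x 0)
        + ∫ s in (0:ℝ)..t, R t s (Φ s (IccExtend hT.le x s))) ∧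
      IccExtend hT.le x 0 = IccExtend hT.le x T := by
    intro Φ x w hw hx
    have hval : ∀ t ∈ Icc (0:ℝ) T, IccExtend hT.le x t =
        R t 0 (B (∫ s in (0:ℝ)..T, R T s (IccExtend hT.le w s)))
        + ∫ s in (0:ℝ)..t, R t s (IccExtend hT.le w s) := by
      intro t ht
      rw [hext x t ht, ← hx, hK]
      rfl
    have h0 : IccExtend hT.le x 0 = B (∫ s in (0:ℝ)..T, R T s (IccExtend hT.le w s)) := by
      rw [hval 0 hT0, hR.refl 0 hT0]
      simp
    refine ⟨(x.continuous.Icc_extend').continuousOn, ?_, ?_⟩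
    · intro t ht
      rw [hval t ht, h0]
      congr 1
      refine intervalIntegral.integral_congr fun s hs => ?_
      rw [uIcc_of_le ht.1] at hs
      have hs' : s ∈ Icc (0:ℝ) T := ⟨hs.1, hs.2.trans ht.2⟩
      simp only [hext w s hs', hext x s hs', hw]
    · rw [hval T hTT, h0]
      have := hBinv (∫ s in (0:ℝ)..T, R T s (IccExtend hT.le w s))
      exact sub_eq_iff_eq_add'.1 this
  -- Nemytskii operators
  obtain ⟨Minf, hMinf⟩ := isCompact_Icc.exists_bound_of_continuousOn hFinfc
  have hMinf0 : 0 ≤ Minf := (norm_nonneg _).trans (hMinf 0 hT0)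
  have hFr : Continuous (fun q : Icc (0:ℝ) T × E => F q.1 q.2) := by
    refine hFc.comp_continuous (f := fun q : Icc (0:ℝ) T × E => ((q.1 : ℝ), q.2)) (by fun_prop) ?_
    exact fun q => ⟨q.1.2, mem_univ _⟩
  have hFinfr : Continuous (fun t : Icc (0:ℝ) T => Finf t) :=
    continuousOn_iff_continuous_restrict.1 hFinfc
  let NF : C(Icc (0:ℝ) T, E) → C(Icc (0:ℝ) T, E) := fun u =>
    ⟨fun t => F t (u t), hFr.comp (continuous_id.prodMk u.continuous)⟩
  have hNFc : Continuous NF := by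
    refine ContinuousMap.continuous_of_continuous_uncurry _ ?_
    have h : Continuous (fun q : C(Icc (0:ℝ) T, E) × Icc (0:ℝ) T => (q.2, q.1 q.2)) := by fun_prop
    exact hFr.comp h
  let Ninf0 : C(Icc (0:ℝ) T, E) →ₗ[ℝ] C(Icc (0:ℝ) T, E) :=
    { toFun := fun u => ⟨fun t => Finf t (u t), hFinfr.clm_apply u.continuous⟩
      map_add' := fun u v => by ext t; simp
      map_smul' := fun a u => by ext t; simp }
  let Ninf : C(Icc (0:ℝ) T, E) →L[ℝ] C(Icc (0:ℝ) T, E) := Ninf0.mkContinuous Minf (by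
    intro u
    rw [ContinuousMap.norm_le _ (by positivity)]
    intro t
    refine ((Finf t).le_opNorm (u t)).trans ?_
    exact mul_le_mul (hMinf t t.2) (u.norm_coe_le_norm t) (norm_nonneg _) hMinf0)
  have hNinf : ∀ u (t : Icc (0:ℝ) T), Ninf u t = Finf t (u t) := fun u t => rfl
  have hNF : ∀ u (t : Icc (0:ℝ) T), NF u t = F t (u t) := fun u t => rfl
  -- the compact linear operator
  let L : C(Icc (0:ℝ) T, E) →L[ℝ] C(Icc (0:ℝ) T, E) := K.comp Ninf
  have hLc : IsCompactOperator L := by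
    obtain ⟨C, hC, hCm⟩ := evk_family_compact Finf hFinfc hFinfcpt 1
    obtain ⟨Q, hQ, hQm⟩ := hKc C hC
    refine (isCompactOperator_iff_image_closedBall_subset_compact (𝕜₁ := ℝ)
      (L : C(Icc (0:ℝ) T, E) →ₗ[ℝ] C(Icc (0:ℝ) T, E)) one_pos).2 ⟨Q, hQ, ?_⟩
    rintro _ ⟨u, hu, rfl⟩
    rw [mem_closedBall_zero_iff] at hu
    exact hQm (Ninf u) (fun t => hCm t t.2 _ ((u.norm_coe_le_norm t).trans hu))
  have hLinj : ∀ u, L u = u → u = 0 := by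
    intro u hu
    obtain ⟨hc1, hc2, hc3⟩ := hmild (fun t x => Finf t x) u (Ninf u) (fun t => hNinf u t) hu
    have h0 := hlin 1 one_pos le_rfl (IccExtend hT.le u) hc1
      (fun t ht => by rw [one_smul]; exact hc2 t ht) hc3
    ext t
    rw [← hext u t t.2]
    exact h0 t t.2
  have hres : (1:ℝ) ∈ resolventSet ℝ L := by
    refine (hLc.hasEigenvalue_or_mem_resolventSet one_ne_zero).resolve_left fun hev => ?_
    obtain ⟨v, hv⟩ := hev.exists_hasEigenvector
    have h : L v = v := by simpa using hv.apply_eq_smul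
    exact hv.2 (hLinj v h)
  rw [spectrum.mem_resolventSet_iff, map_one] at hres
  obtain ⟨P, hP⟩ := hres
  let J : C(Icc (0:ℝ) T, E) →L[ℝ] C(Icc (0:ℝ) T, E) := ↑P⁻¹
  have hJ : ∀ y, J y - L (J y) = y := by
    intro y
    have h : (1 - L) * J = 1 := by rw [← hP]; exact Units.mul_inv P
    have h' := DFunLike.congr_fun h y
    simpa using h'
  -- the sublinear map
  let G : C(Icc (0:ℝ) T, E) → C(Icc (0:ℝ) T, E) := fun u => J (K (NF u - Ninf u))
  have hGc : Continuous G := J.continuous.comp (K.continuous.comp (hNFc.sub Ninf.continuous))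
  set κ : ℝ := ‖J‖ * ‖K‖ + 1 with hκ
  have hκpos : 0 < κ := by positivity
  obtain ⟨Rr, hRr⟩ := hasym (1 / (2 * κ)) (by positivity)
  set R0 := max Rr 0 with hR0
  have hR00 : 0 ≤ R0 := le_max_right _ _
  set C0 : ℝ := c * (1 + R0) + Minf * R0 with hC0
  have hC00 : 0 ≤ C0 := by positivity
  have hsub : ∀ t ∈ Icc (0:ℝ) T, ∀ x : E, ‖F t x - Finf t x‖ ≤ 1 / (2 * κ) * ‖x‖ + C0 := by
    intro t ht x
    rcases le_total R0 ‖x‖ with h | h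
    · have := hRr x ((le_max_left _ _).trans h) t ht
      linarith
    · have h3 : ‖F t x‖ ≤ c * (1 + R0) := (hF2 t ht x).trans (by gcongr)
      have h4 : ‖Finf t x‖ ≤ Minf * R0 := ((Finf t).le_opNorm x).trans
        (mul_le_mul (hMinf t ht) h (norm_nonneg _) hMinf0)
      have h5 : 0 ≤ 1 / (2 * κ) * ‖x‖ := by positivity
      linarith [norm_sub_le (F t x) (Finf t x)]
  set ρ : ℝ := 2 * κ * C0 + 1 with hρ
  have hρpos : 0 < ρ := by positivity
  have hGb : ∀ u, ‖u‖ ≤ ρ → ‖G u‖ ≤ ρ := by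
    intro u hu
    have h6 : ‖NF u - Ninf u‖ ≤ 1 / (2 * κ) * ρ + C0 := by
      rw [ContinuousMap.norm_le _ (by positivity)]
      intro t
      refine (hsub t t.2 (u t)).trans ?_
      have : ‖u t‖ ≤ ρ := (u.norm_coe_le_norm t).trans hu
      gcongr
    have h7 : ‖G u‖ ≤ ‖J‖ * (‖K‖ * ‖NF u - Ninf u‖) :=
      (J.le_opNorm _).trans (mul_le_mul_of_nonneg_left (K.le_opNorm _) (norm_nonneg _))
    have h8 : ‖J‖ * (‖K‖ * ‖NF u - Ninf u‖) ≤ κ * (1 / (2 * κ) * ρ + C0) := by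
      rw [← mul_assoc]
      exact mul_le_mul (by rw [hκ]; linarith) h6 (norm_nonneg _) hκpos.le
    have h9 : κ * (1 / (2 * κ) * ρ + C0) = ρ / 2 + κ * C0 := by field_simp
    rw [h9] at h8
    have h10 : κ * C0 ≤ ρ / 2 := by rw [hρ]; linarith
    linarith
  obtain ⟨C1, hC1, hC1m⟩ := evk_family_compact Finf hFinfc hFinfcpt ρ
  have hC2 := hFcpt (Metric.closedBall (0:E) ρ) Metric.isBounded_closedBall
  set C2 := closure {y : E | ∃ t ∈ Icc (0 : ℝ) T, ∃ x ∈ Metric.closedBall (0:E) ρ, y = F t x}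
    with hC2def
  obtain ⟨Q, hQ, hQm⟩ := hKc _ ((hC2.prod hC1).image (f := fun q : E × E => q.1 - q.2) (by fun_prop))
  have hGK : ∀ u, ‖u‖ ≤ ρ → G u ∈ J '' Q := by
    intro u hu
    refine mem_image_of_mem _ (hQm _ fun t => ?_)
    have hut : ‖u t‖ ≤ ρ := (u.norm_coe_le_norm t).trans hu
    exact ⟨(F t (u t), Finf t (u t)),
      ⟨subset_closure ⟨t, t.2, u t, by simpa using hut, rfl⟩, hC1m t t.2 _ hut⟩, rfl⟩
  obtain ⟨u, hu⟩ := schauder_ball G hGc ρ hρpos (J '' Q) (hQ.image J.continuous) hGK hGb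
  have hfix : K (NF u) = u := by
    have h := hJ (K (NF u - Ninf u))
    change G u - L (G u) = _ at h
    rw [hu, map_sub] at h
    change u - K (Ninf u) = _ at h
    exact (sub_left_inj.1 h).symm
  obtain ⟨hc1, hc2, hc3⟩ := hmild F u (NF u) (fun t => hNF u t) hfix
  exact ⟨IccExtend hT.le u, hc1, hc2, hc3⟩
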